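/- The series ∑_{n=0}^∞ [((1/2)_n)^5 / ((1)_n)^5] · ((-1)^n / 4^n) · (20n² + 8n + 1) converges and has sum 8/π², where π is the real number pi. -/

import Mathlib

open Real

/-- `poch a n` is the rising factorial (Pochhammer symbol) `(a)ₙ = a(a+1)⋯(a+n−1)`. -/
noncomputable def poch (a : ℝ) (n : ℕ) : ℝ := (ascPochhammer ℝ n).eval a

/-!
The series is the row `k = 0` of a family `∑ₙ G(n, k)` in which `G` has a Wilf–Zeilberger mate `F`:
`G(n, k + 1) - G(n, k) = F(n + 1, k) - F(n, k)`. Summing over `n` telescopes the right-hand side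
to `0`, so the sum does not depend on `k`. Since `|G(n, k)| ≤ 20 / 4ⁿ` uniformly in `k`, the sum can
be evaluated by letting `k → ∞` term by term: every term with `n ≥ 1` tends to `0`, and Wallis'
product gives `G(0, k) → 8 / π²`.
-/

open Filter Topology

/-- A Wilf–Zeilberger pair, in the convention in which one sums `G` over `n` and `F` is the
discrete antiderivative that makes the sum independent of `k`. -/
def IsWZPair {E : Type*} [AddCommGroup E] (F G : ℕ → ℕ → E) : Prop :=
  ∀ n k, F (n + 1) k - F n k = G n (k + 1) - G n k

namespace IsWZPair

lemma tsum_eq_tsum_zero {E : Type*} [AddCommGroup E] [TopologicalSpace E] [IsTopologicalAddGroup E]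
    [T2Space E] {F G : ℕ → ℕ → E} (h : IsWZPair F G) (hF_zero : ∀ k, F 0 k = 0)
    (hF : ∀ k, Tendsto (F · k) atTop (𝓝 0)) (hG : ∀ k, Summable (G · k)) (k : ℕ) :
    ∑' n, G n k = ∑' n, G n 0 := by
  induction k with
  | zero => rfl
  | succ k ih =>
    have telescope (N : ℕ) : ∑ n ∈ Finset.range N, (G n (k + 1) - G n k) = F N k := by
      simp only [← h _ k, Finset.sum_range_sub (F · k), hF_zero, sub_zero]
    have partial_sums := ((hG (k + 1)).hasSum.sub (hG k).hasSum).tendsto_sum_nat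
    simp only [telescope] at partial_sums
    rw [← ih, ← sub_eq_zero]
    exact tendsto_nhds_unique partial_sums (hF k)

lemma hasSum_of_dominated {E : Type*} [NormedAddCommGroup E] [CompleteSpace E]
    {F G : ℕ → ℕ → E} {g : ℕ → E} {bound : ℕ → ℝ} (h : IsWZPair F G)
    (hF_zero : ∀ k, F 0 k = 0) (hF : ∀ k, Tendsto (F · k) atTop (𝓝 0))
    (h_bound : Summable bound) (hG : ∀ n k, ‖G n k‖ ≤ bound n)
    (hg : ∀ n, Tendsto (G n) atTop (𝓝 (g n))) (k : ℕ) :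
    HasSum (G · k) (∑' n, g n) := by
  have summable_G (k : ℕ) : Summable (G · k) := .of_norm_bounded h_bound (hG · k)
  have limit : Tendsto (fun k ↦ ∑' n, G n k) atTop (𝓝 (∑' n, g n)) :=
    tendsto_tsum_of_dominated_convergence h_bound hg (.of_forall fun k n ↦ hG n k)
  have tsum_eq := h.tsum_eq_tsum_zero hF_zero hF summable_G
  simp only [tsum_eq, tendsto_const_nhds_iff] at limit
  rw [← limit, ← tsum_eq k]
  exact (summable_G k).hasSum

end IsWZPair

lemma poch_zero (a : ℝ) : poch a 0 = 1 := by simp [poch]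

lemma poch_succ (a : ℝ) (n : ℕ) : poch a (n + 1) = poch a n * (a + n) := by
  simp [poch, ascPochhammer_succ_eval]

lemma poch_pos {a : ℝ} (ha : 0 < a) (n : ℕ) : 0 < poch a n := ascPochhammer_pos n a ha

lemma poch_one (n : ℕ) : poch 1 n = n.factorial := ascPochhammer_eval_one ℝ n

/-- The ratio `(1/2)ₙ / (1)ₙ = C(2n, n) / 4ⁿ`, which governs the size of the summands. -/
noncomputable def halfRatio (n : ℕ) : ℝ := poch (1 / 2) n / poch 1 n

lemma halfRatio_zero : halfRatio 0 = 1 := by simp [halfRatio, poch_zero]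

lemma halfRatio_succ (n : ℕ) : halfRatio (n + 1) = halfRatio n * ((n + 1 / 2) / (n + 1)) := by
  simp only [halfRatio, poch_succ, mul_div_mul_comm, add_comm]

lemma halfRatio_pos (n : ℕ) : 0 < halfRatio n :=
  div_pos (poch_pos (by norm_num) n) (poch_pos one_pos n)

lemma halfRatio_sq_mul_add_one_le_one (n : ℕ) : halfRatio n ^ 2 * (n + 1) ≤ 1 := by
  induction n with
  | zero => simp [halfRatio_zero]
  | succ n ih =>
    have step : ((n + 1 / 2) / (n + 1) : ℝ) ^ 2 * (n + 1 + 1) ≤ n + 1 := by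
      rw [div_pow, div_mul_eq_mul_div, div_le_iff₀ (by positivity)]
      nlinarith [sq_nonneg (n : ℝ), n.cast_nonneg (α := ℝ)]
    push_cast
    calc halfRatio (n + 1) ^ 2 * (n + 1 + 1)
        = halfRatio n ^ 2 * (((n + 1 / 2) / (n + 1)) ^ 2 * (n + 1 + 1)) := by
          rw [halfRatio_succ]; ring
      _ ≤ halfRatio n ^ 2 * (n + 1) := by gcongr
      _ ≤ 1 := ih

lemma halfRatio_pow_four_mul_sq_le_one (n : ℕ) : halfRatio n ^ 4 * (n + 1) ^ 2 ≤ 1 :=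
  calc halfRatio n ^ 4 * (n + 1) ^ 2 = (halfRatio n ^ 2 * (n + 1)) ^ 2 := by ring
    _ ≤ 1 := pow_le_one₀ (by positivity) (halfRatio_sq_mul_add_one_le_one n)

lemma halfRatio_le_one (n : ℕ) : halfRatio n ≤ 1 := by
  have sq_le_one : halfRatio n ^ 2 ≤ 1 :=
    (le_mul_of_one_le_right (sq_nonneg _) (by simp)).trans (halfRatio_sq_mul_add_one_le_one n)
  exact (sq_le_one_iff₀ (halfRatio_pos n).le).mp sq_le_one

lemma tendsto_halfRatio_sq : Tendsto (fun n ↦ halfRatio n ^ 2) atTop (𝓝 0) := by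
  refine squeeze_zero (fun n ↦ sq_nonneg _) (fun n ↦ ?_)
    (tendsto_one_div_add_atTop_nhds_zero_nat (𝕜 := ℝ))
  rw [le_div_iff₀ (by positivity)]
  exact halfRatio_sq_mul_add_one_le_one n

lemma halfRatio_sq_mul_eq_inv_wallis (n : ℕ) :
    halfRatio n ^ 2 * (2 * n + 1) = (Wallis.W n)⁻¹ := by
  induction n with
  | zero => simp [halfRatio_zero, Wallis.W]
  | succ n ih =>
    rw [Wallis.W_succ, mul_inv, ← ih, halfRatio_succ]
    push_cast
    field_simp
    ring

lemma tendsto_halfRatio_sq_mul :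
    Tendsto (fun n : ℕ ↦ halfRatio n ^ 2 * (2 * n + 1)) atTop (𝓝 (2 / π)) := by
  simp only [halfRatio_sq_mul_eq_inv_wallis, ← inv_div π]
  exact Wallis.tendsto_W_nhds_pi_div_two.inv₀ (by positivity)

/-- The hypergeometric term common to both members of the Wilf–Zeilberger pair. At `k = 0` it is
the summand of the series without its quadratic factor. -/
noncomputable def wzKernel (n k : ℕ) : ℝ :=
  (-1 / 4) ^ n * (poch (1 / 2) n ^ 5 * poch (1 / 2) k ^ 4) / (poch 1 n * poch 1 (n + k) ^ 4)

/-- The member `G` of the Wilf–Zeilberger pair: the summand, deformed by the parameter `k`. -/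
noncomputable def wzSummand (n k : ℕ) : ℝ :=
  wzKernel n k * (20 * n ^ 2 + 8 * n + 1 + 24 * k * n + 8 * k ^ 2 + 4 * k)

/-- The member `F` of the Wilf–Zeilberger pair: the mate of `wzSummand`. -/
noncomputable def wzMate (n k : ℕ) : ℝ :=
  wzKernel n k * (8 * n * (2 * n + 4 * k + 1))

lemma isWZPair_wzMate_wzSummand : IsWZPair wzMate wzSummand := by
  intro n k
  have := (poch_pos one_pos n).ne'
  have := (poch_pos one_pos (n + k)).ne'
  have : (1 : ℝ) + n ≠ 0 := by positivity
  have : (1 : ℝ) + (n + k) ≠ 0 := by positivity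
  simp only [wzMate, wzSummand, wzKernel, Nat.add_right_comm n 1 k, ← Nat.add_assoc n k 1,
    poch_succ]
  push_cast
  field_simp
  ring

lemma abs_wzKernel (n k : ℕ) :
    |wzKernel n k| =
      (1 / 4) ^ n * (halfRatio n ^ 5 * halfRatio k ^ 4) / ((n + k).choose n : ℝ) ^ 4 := by
  have := poch_pos (a := 1 / 2) (by norm_num)
  have := poch_pos one_pos
  simp only [wzKernel, abs_div, abs_mul, abs_pow, abs_neg, abs_one, abs_of_pos, Nat.abs_ofNat, *]
  simp only [halfRatio, Nat.cast_add_choose, ← poch_one]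
  have := (poch_pos one_pos n).ne'
  have := (poch_pos one_pos k).ne'
  field_simp

lemma one_le_choose_add (n k : ℕ) : (1 : ℝ) ≤ (n + k).choose n := by
  exact_mod_cast Nat.choose_pos (Nat.le_add_right n k)

lemma abs_wzKernel_mul_sq_le (n k : ℕ) :
    |wzKernel n k| * (n + k + 1) ^ 2 ≤ (1 / 4) ^ n / ((n + k).choose n : ℝ) ^ 4 := by
  have hn := halfRatio_pos n
  have sq_le : ((n : ℝ) + k + 1) ^ 2 ≤ (n + 1) ^ 2 * (k + 1) ^ 2 := by
    rw [← mul_pow]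
    gcongr
    nlinarith [mul_nonneg (n.cast_nonneg (α := ℝ)) (k.cast_nonneg (α := ℝ))]
  rw [abs_wzKernel, div_mul_eq_mul_div]
  gcongr
  calc (1 / 4) ^ n * (halfRatio n ^ 5 * halfRatio k ^ 4) * ((n : ℝ) + k + 1) ^ 2
      ≤ (1 / 4) ^ n * (halfRatio n ^ 5 * halfRatio k ^ 4) * ((n + 1) ^ 2 * (k + 1) ^ 2) := by
        gcongr
    _ = (1 / 4) ^ n * (halfRatio n * (halfRatio n ^ 4 * (n + 1) ^ 2) *
          (halfRatio k ^ 4 * (k + 1) ^ 2)) := by ring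
    _ ≤ (1 / 4) ^ n * (1 * 1 * 1) := by
        gcongr
        exacts [halfRatio_le_one n, halfRatio_pow_four_mul_sq_le_one n,
          halfRatio_pow_four_mul_sq_le_one k]
    _ = (1 / 4) ^ n := by ring

lemma norm_wzKernel_mul_le {n k : ℕ} {C p : ℝ} (hp : |p| ≤ C * (n + k + 1) ^ 2) :
    ‖wzKernel n k * p‖ ≤ C * (1 / 4) ^ n / ((n + k).choose n : ℝ) ^ 4 := by
  have hC : 0 ≤ C := nonneg_of_mul_nonneg_left ((abs_nonneg p).trans hp) (by positivity)
  calc ‖wzKernel n k * p‖ = |wzKernel n k| * |p| := norm_mul _ _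
    _ ≤ |wzKernel n k| * (C * (n + k + 1) ^ 2) := by gcongr
    _ = C * (|wzKernel n k| * (n + k + 1) ^ 2) := by ring
    _ ≤ C * ((1 / 4) ^ n / ((n + k).choose n : ℝ) ^ 4) := by
        gcongr
        exact abs_wzKernel_mul_sq_le n k
    _ = C * (1 / 4) ^ n / ((n + k).choose n : ℝ) ^ 4 := (mul_div_assoc ..).symm

lemma norm_wzSummand_le_div_choose (n k : ℕ) :
    ‖wzSummand n k‖ ≤ 20 * (1 / 4) ^ n / ((n + k).choose n : ℝ) ^ 4 := by
  refine norm_wzKernel_mul_le ?_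
  rw [abs_of_nonneg (by positivity)]
  have : (0 : ℝ) ≤ n * k := by positivity
  nlinarith [sq_nonneg (k : ℝ), n.cast_nonneg (α := ℝ), k.cast_nonneg (α := ℝ)]

lemma norm_wzSummand_le (n k : ℕ) : ‖wzSummand n k‖ ≤ 20 * (1 / 4) ^ n :=
  (norm_wzSummand_le_div_choose n k).trans
    (div_le_self (by positivity) (one_le_pow₀ (one_le_choose_add n k)))

lemma norm_wzMate_le (n k : ℕ) : ‖wzMate n k‖ ≤ 16 * (1 / 4) ^ n := by
  refine (norm_wzKernel_mul_le (C := 16) ?_).trans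
    (div_le_self (by positivity) (one_le_pow₀ (one_le_choose_add n k)))
  rw [abs_of_nonneg (by positivity)]
  nlinarith [sq_nonneg (k : ℝ), n.cast_nonneg (α := ℝ), k.cast_nonneg (α := ℝ)]

lemma summable_const_mul_quarter_pow (C : ℝ) : Summable fun n : ℕ ↦ C * (1 / 4 : ℝ) ^ n :=
  (summable_geometric_of_lt_one (by norm_num) (by norm_num)).mul_left C

lemma tendsto_wzMate (k : ℕ) : Tendsto (wzMate · k) atTop (𝓝 0) :=
  squeeze_zero_norm (norm_wzMate_le · k) (summable_const_mul_quarter_pow 16).tendsto_atTop_zero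

lemma wzSummand_zero_left (k : ℕ) :
    wzSummand 0 k = halfRatio k ^ 4 * (8 * k ^ 2 + 4 * k + 1) := by
  simp only [wzSummand, wzKernel, halfRatio, poch_zero, zero_add, Nat.cast_zero]
  ring

lemma tendsto_wzSummand_zero_left : Tendsto (wzSummand 0) atTop (𝓝 (8 / π ^ 2)) := by
  have expand (k : ℕ) : wzSummand 0 k =
      2 * (halfRatio k ^ 2 * (2 * k + 1)) ^ 2
        - 2 * (halfRatio k ^ 2 * (2 * k + 1) * halfRatio k ^ 2) + (halfRatio k ^ 2) ^ 2 := by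
    rw [wzSummand_zero_left]
    ring
  have limit := (((tendsto_halfRatio_sq_mul.pow 2).const_mul 2).sub
    ((tendsto_halfRatio_sq_mul.mul tendsto_halfRatio_sq).const_mul 2)).add
    (tendsto_halfRatio_sq.pow 2)
  convert limit using 2
  · exact expand _
  · ring

lemma add_one_le_choose_succ_add (n k : ℕ) : (k + 1 : ℝ) ≤ (n + 1 + k).choose (n + 1) := by
  have : k + 1 ≤ (n + 1 + k).choose (n + 1) := by
    rw [Nat.choose_symm_add, ← Nat.choose_succ_self_right]
    exact Nat.choose_le_choose k (by omega)
  exact_mod_cast this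

lemma tendsto_wzSummand_succ_left (n : ℕ) : Tendsto (wzSummand (n + 1)) atTop (𝓝 0) := by
  have limit : Tendsto (fun k : ℕ ↦ 20 * (1 / ((k : ℝ) + 1))) atTop (𝓝 0) := by
    simpa only [mul_zero] using (tendsto_one_div_add_atTop_nhds_zero_nat (𝕜 := ℝ)).const_mul 20
  refine squeeze_zero_norm (fun k ↦ (norm_wzSummand_le_div_choose (n + 1) k).trans ?_) limit
  have choose_pow_ge : (k + 1 : ℝ) ≤ ((n + 1 + k).choose (n + 1) : ℝ) ^ 4 :=
    (add_one_le_choose_succ_add n k).trans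
      (le_self_pow₀ (one_le_choose_add (n + 1) k) (by norm_num))
  rw [mul_div_assoc]
  gcongr
  exact pow_le_one₀ (by norm_num) (by norm_num)

lemma tendsto_wzSummand (n : ℕ) :
    Tendsto (wzSummand n) atTop (𝓝 ((Pi.single 0 (8 / π ^ 2) : ℕ → ℝ) n)) := by
  cases n with
  | zero => simpa using tendsto_wzSummand_zero_left
  | succ n => simpa using tendsto_wzSummand_succ_left n

theorem ramanujan_like_series_20n2_8n_1_general (k : ℕ) :
    HasSum (fun n ↦ wzSummand n k) (8 / π ^ 2) := by
  rw [← tsum_pi_single 0 (8 / π ^ 2)]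
  exact isWZPair_wzMate_wzSummand.hasSum_of_dominated (fun k ↦ by simp [wzMate]) tendsto_wzMate
    (summable_const_mul_quarter_pow 20) norm_wzSummand_le tendsto_wzSummand k

lemma wzSummand_zero_right (n : ℕ) :
    wzSummand n 0 =
      poch (1 / 2) n ^ 5 / poch 1 n ^ 5 * ((-1) ^ n / 4 ^ n) * (20 * n ^ 2 + 8 * n + 1) := by
  simp only [wzSummand, wzKernel, poch_zero, add_zero, Nat.cast_zero, div_pow]
  ring

theorem ramanujan_like_series_20n2_8n_1 :
    HasSum (fun n : ℕ =>
      (poch (1/2) n)^5 / (poch 1 n)^5 * ((-1)^n / 4^n) *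
        (20 * (n : ℝ)^2 + 8 * n + 1))
      (8 / π^2) := by
  simpa only [wzSummand_zero_right] using ramanujan_like_series_20n2_8n_1_general 0
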